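/- Let R be a Noetherian ring, 𝔞 an ideal of R, and M an R-module with dim Supp(M) ≤ 1 and Supp(M) ⊆ V(𝔞). Then M is 𝔞-weakly cofinite if and only if the R-modules Hom_R(R/𝔞, M) and Ext^1_R(R/𝔞, M) are weakly Laskerian. -/

import Mathlib

open CategoryTheory

universe u

variable (R : Type u) [CommRing R]

/-- The `i`-th Ext module `Ext^i_R(N, M)` of `R`-modules. -/
noncomputable def extModule (i : ℕ) (N M : ModuleCat.{u} R) : ModuleCat.{u} R :=
  ((Ext R (ModuleCat.{u} R) i).obj (Opposite.op N)).obj M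

/-- A module is weakly Laskerian if every quotient has finitely many associated primes. -/
def IsWeaklyLaskerian (M : Type u) [AddCommGroup M] [Module R M] : Prop :=
  ∀ N : Submodule R M, (associatedPrimes R (M ⧸ N)).Finite

/-- `M` is `𝔞`-cofinite: `Supp M ⊆ V(𝔞)` and all `Ext^i_R(R/𝔞, M)` are finitely generated. -/
def IsCofinite (𝔞 : Ideal R) (M : ModuleCat.{u} R) : Prop :=
  Module.support R M ⊆ PrimeSpectrum.zeroLocus (𝔞 : Set R) ∧
    ∀ i : ℕ, Module.Finite R (extModule R i (ModuleCat.of R (R ⧸ 𝔞)) M)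

/-- `M` is `𝔞`-weakly cofinite: `Supp M ⊆ V(𝔞)` and all `Ext^i_R(R/𝔞, M)` are weakly
Laskerian. -/
def IsWeaklyCofinite (𝔞 : Ideal R) (M : ModuleCat.{u} R) : Prop :=
  Module.support R M ⊆ PrimeSpectrum.zeroLocus (𝔞 : Set R) ∧
    ∀ i : ℕ, IsWeaklyLaskerian R (extModule R i (ModuleCat.of R (R ⧸ 𝔞)) M)

/-- The Krull dimension of the support of a module. -/
noncomputable def suppDim (M : Type u) [AddCommGroup M] [Module R M] : WithBot ℕ∞ :=
  Order.krullDim (Module.support R M)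

/-- The cohomological dimension `cd(𝔞, M) = sup {i | H^i_𝔞(M) ≠ 0}`, as an element of `ℕ∞`. -/
noncomputable def cohomologicalDim (𝔞 : Ideal R) (M : ModuleCat.{u} R) : ℕ∞ :=
  ⨆ i ∈ {i : ℕ | Nontrivial ((localCohomology 𝔞 i).obj M)}, (i : ℕ∞)

/-- `p` is an attached prime of `M`: `p` is prime and is the annihilator of a quotient
of `M`. -/
def IsAttachedPrime (M : Type u) [AddCommGroup M] [Module R M] (p : Ideal R) : Prop :=
  p.IsPrime ∧ ∃ N : Submodule R M, p = Module.annihilator R (M ⧸ N)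

section ExtComparison

theorem equiv_of_ker {R A B C : Type*} [CommRing R] [AddCommGroup A] [AddCommGroup B]
    [AddCommGroup C] [Module R A] [Module R B] [Module R C] (f : A →ₗ[R] B) (g : A →ₗ[R] C)
    (hf : Function.Surjective f) (hg : Function.Surjective g)
    (h : LinearMap.ker f = LinearMap.ker g) : Nonempty (B ≃ₗ[R] C) :=
  ⟨(f.quotKerEquivOfSurjective hf).symm ≪≫ₗ Submodule.quotEquivOfEq _ _ h ≪≫ₗ
    g.quotKerEquivOfSurjective hg⟩

theorem linearYoneda_preserves (M : ModuleCat.{u} R) :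
    Limits.PreservesFiniteLimits ((linearYoneda R (ModuleCat.{u} R)).obj M) := by
  have : Limits.PreservesLimitsOfSize.{0,0}
      ((linearYoneda R (ModuleCat.{u} R)).obj M ⋙ forget (ModuleCat R)) :=
    inferInstanceAs (Limits.PreservesLimitsOfSize.{0,0} (yoneda.obj M))
  have := Limits.preservesLimits_of_reflects_of_preserves.{0,0}
    ((linearYoneda R (ModuleCat.{u} R)).obj M) (forget (ModuleCat R))
  exact Limits.PreservesLimitsOfSize.preservesFiniteLimits _

theorem extModule_zero (N M : ModuleCat.{u} R) :
    Nonempty (extModule R 0 N M ≃ₗ[R] (N →ₗ[R] M)) := by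
  have := linearYoneda_preserves R M
  have : Limits.PreservesFiniteColimits ((linearYoneda R (ModuleCat.{u} R)).obj M).rightOp :=
    Limits.preservesFiniteColimits_rightOp _
  let e := (Functor.leftDerivedZeroIsoSelf ((linearYoneda R (ModuleCat.{u} R)).obj M).rightOp).app N
  have e' : extModule R 0 N M ≅ ModuleCat.of R (N ⟶ M) := e.unop.symm
  exact ⟨e'.toLinearEquiv ≪≫ₗ ModuleCat.homLinearEquiv (S := R)⟩

theorem homology_desc (N M : ModuleCat.{u} R) (P : ProjectiveResolution N) (n : ℕ) :
    ∃ (A : Type u) (_ : AddCommGroup A) (_ : Module R A)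
      (ι : A →ₗ[R] (P.complex.X (n+1) ⟶ M))
      (π : A →ₗ[R] ((P.complex.linearYonedaObj R M).homology (n+1))),
      Function.Surjective π ∧ (∀ z, P.complex.d (n+2) (n+1) ≫ ι z = 0) ∧
      (∀ f : P.complex.X (n+1) ⟶ M, P.complex.d (n+2) (n+1) ≫ f = 0 → ∃ z, ι z = f) ∧
      (∀ z, π z = 0 ↔ ∃ w : P.complex.X n ⟶ M, P.complex.d (n+1) n ≫ w = ι z) := by
  let K := P.complex.linearYonedaObj R M
  have hi : Function.Injective (K.iCycles (n+1)).hom := by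
    rw [← ModuleCat.mono_iff_injective]; infer_instance
  have hex : (ShortComplex.mk (K.toCycles n (n+1)) (K.homologyπ (n+1)) (by simp)).Exact :=
    ShortComplex.exact_of_g_is_cokernel _ (K.homologyIsCokernel n (n+1) (by simp))
  have hex2 : (ShortComplex.mk (K.iCycles (n+1)) (K.d (n+1) (n+2)) (by simp)).Exact :=
    ShortComplex.exact_of_f_is_kernel _ (K.cyclesIsKernel (n+1) (n+2) (by simp))
  rw [ShortComplex.moduleCat_exact_iff] at hex hex2
  have hs : Function.Surjective (K.homologyπ (n+1)).hom := by
    rw [← ModuleCat.epi_iff_surjective]; infer_instance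
  refine ⟨K.cycles (n+1), inferInstance, inferInstance, (K.iCycles (n+1)).hom,
    (K.homologyπ (n+1)).hom, hs, ?_, ?_, ?_⟩
  · intro z
    exact congrArg (fun f => f.hom z) (K.iCycles_d (n+1) (n+2))
  · intro f hf
    exact hex2 f hf
  · intro z
    constructor
    · intro h
      obtain ⟨w, hw⟩ := hex z h
      refine ⟨w, ?_⟩
      have := congrArg (fun f => f.hom w) (K.toCycles_i n (n+1))
      exact this.symm.trans (congrArg (K.iCycles (n+1)).hom hw)
    · rintro ⟨w, hw⟩
      have : (K.toCycles n (n+1)).hom w = z := by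
        apply hi
        have := congrArg (fun f => f.hom w) (K.toCycles_i n (n+1))
        exact this.trans hw
      rw [← this]
      exact congrArg (fun f => f.hom w) (K.toCycles_comp_homologyπ n (n+1))

theorem extModule_succ (N M : ModuleCat.{u} R) (n : ℕ) :
    Nonempty (extModule R (n+1) N M ≃ₗ[R] Abelian.Ext.{u} N M (n+1)) := by
  let P := projectiveResolution N
  obtain ⟨A, _, _, ι, π, hs, hd, hsur, hker⟩ := homology_desc R N M P n
  let g : A →ₗ[R] Abelian.Ext.{u} N M (n+1) :=
    { toFun := fun z => P.extMk (ι z) (n+2) rfl (hd z)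
      map_add' := by
        intro x y
        rw [P.add_extMk]
        congr 1
        exact map_add ι x y
      map_smul' := by
        intro r x
        rw [RingHom.id_apply, Abelian.Ext.smul_eq_comp_mk₀, P.extMk_comp_mk₀]
        congr 1
        rw [map_smul]
        ext t
        simp }
  have hg : ∀ z, g z = P.extMk (ι z) (n+2) rfl (hd z) := fun z => rfl
  obtain ⟨e⟩ := equiv_of_ker π g hs (by
    intro α
    obtain ⟨f, hf, rfl⟩ := P.extMk_surjective α (n+2) rfl
    obtain ⟨z, rfl⟩ := hsur f hf
    exact ⟨z, rfl⟩) (by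
    ext z
    rw [LinearMap.mem_ker, LinearMap.mem_ker, hg, P.extMk_eq_zero_iff _ _ _ _ n rfl, hker])
  exact ⟨(P.isoExt (R := R) (n+1) M).toLinearEquiv ≪≫ₗ e⟩

/-- Comparison of the two versions of Ext. -/
theorem extModule_equiv (N M : ModuleCat.{u} R) (n : ℕ) :
    Nonempty (extModule R n N M ≃ₗ[R] Abelian.Ext.{u} N M n) := by
  cases n with
  | zero =>
    obtain ⟨e⟩ := extModule_zero R N M
    exact ⟨e ≪≫ₗ (Abelian.Ext.linearEquiv₀.trans ModuleCat.homLinearEquiv).symm⟩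
  | succ n => exact extModule_succ R N M n

end ExtComparison

section WeaklyLaskerian

variable {R}

theorem WL.ass_of_surjective {X Y : Type u} [AddCommGroup X] [Module R X] [AddCommGroup Y]
    [Module R Y] (h : IsWeaklyLaskerian R X) (f : X →ₗ[R] Y) (hf : Function.Surjective f) :
    (associatedPrimes R Y).Finite := by
  rw [← LinearEquiv.AssociatedPrimes.eq (f.quotKerEquivOfSurjective hf)]
  exact h _

theorem WL.of_surjective {X Y : Type u} [AddCommGroup X] [Module R X] [AddCommGroup Y]
    [Module R Y] (h : IsWeaklyLaskerian R X) (f : X →ₗ[R] Y) (hf : Function.Surjective f) :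
    IsWeaklyLaskerian R Y := fun N =>
  WL.ass_of_surjective h (N.mkQ.comp f) (by
    rw [LinearMap.coe_comp]; exact N.mkQ_surjective.comp hf)

theorem WL.of_injective {X Y : Type u} [AddCommGroup X] [Module R X] [AddCommGroup Y]
    [Module R Y] (h : IsWeaklyLaskerian R Y) (f : X →ₗ[R] Y) (hf : Function.Injective f) :
    IsWeaklyLaskerian R X := fun N => by
  refine (h (N.map f)).subset (associatedPrimes.subset_of_injective
    (f := N.mapQ (N.map f) f (Submodule.le_comap_map f N)) ?_)
  rw [← LinearMap.ker_eq_bot, Submodule.ker_mapQ, Submodule.comap_map_eq_of_injective hf]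
  simp

theorem WL.of_equiv {X Y : Type u} [AddCommGroup X] [Module R X] [AddCommGroup Y]
    [Module R Y] (h : IsWeaklyLaskerian R X) (e : X ≃ₗ[R] Y) : IsWeaklyLaskerian R Y :=
  WL.of_surjective h e.toLinearMap e.surjective

theorem WL.ext_submodule {X : Type u} [AddCommGroup X] [Module R X] (S : Submodule R X)
    (h1 : IsWeaklyLaskerian R S) (h2 : IsWeaklyLaskerian R (X ⧸ S)) :
    IsWeaklyLaskerian R X := fun N => by
  have hs := associatedPrimes.subset_union_of_exact (R := R) (f := (S.map N.mkQ).subtype)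
    (g := (S.map N.mkQ).mkQ) (Submodule.injective_subtype _)
    (LinearMap.exact_subtype_mkQ _)
  refine Set.Finite.subset (Set.Finite.union ?_ ?_) hs
  · refine WL.ass_of_surjective h1 (LinearMap.restrict N.mkQ (p := S) (q := S.map N.mkQ)
      (fun x hx => Submodule.mem_map_of_mem hx)) ?_
    rintro ⟨_, x, hx, rfl⟩
    exact ⟨⟨x, hx⟩, rfl⟩
  · refine WL.ass_of_surjective h2 (S.mapQ (S.map N.mkQ) N.mkQ (Submodule.le_comap_map _ _)) ?_
    rw [← LinearMap.range_eq_top, Submodule.range_mapQ]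
    simp

theorem WL.of_exact {X Y Z : Type u} [AddCommGroup X] [Module R X] [AddCommGroup Y]
    [Module R Y] [AddCommGroup Z] [Module R Z] (f : X →ₗ[R] Y) (g : Y →ₗ[R] Z)
    (hfg : ∀ y, g y = 0 → ∃ x, f x = y)
    (h1 : IsWeaklyLaskerian R X) (h2 : IsWeaklyLaskerian R Z) :
    IsWeaklyLaskerian R Y := by
  refine WL.ext_submodule (LinearMap.ker g) ?_ ?_
  · refine WL.of_injective (WL.of_surjective h1 f.rangeRestrict f.surjective_rangeRestrict)
      (Submodule.inclusion (p := LinearMap.ker g) (p' := LinearMap.range f) ?_)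
      (Submodule.inclusion_injective _)
    intro y hy
    exact hfg y hy
  · exact WL.of_injective h2 ((LinearMap.ker g).liftQ g le_rfl)
      (by rw [← LinearMap.ker_eq_bot]; exact Submodule.ker_liftQ_eq_bot' _ _ rfl)

theorem WL.of_finite [IsNoetherianRing R] {X : Type u} [AddCommGroup X] [Module R X]
    [Module.Finite R X] : IsWeaklyLaskerian R X := fun _ => associatedPrimes.finite R _

theorem WL.subsingleton {X : Type u} [AddCommGroup X] [Module R X] [Subsingleton X] :
    IsWeaklyLaskerian R X := fun N => by
  rw [associatedPrimes.eq_empty_of_subsingleton]; exact Set.finite_empty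

theorem mem_ass_iff [IsNoetherianRing R] {X : Type*} [AddCommGroup X] [Module R X] {p : Ideal R} :
    p ∈ associatedPrimes R X ↔ p.IsPrime ∧ ∃ x : X, ∀ r, r ∈ p ↔ r • x = 0 := by
  rw [AssociatedPrimes.mem_iff, isAssociatedPrime_iff]
  simp only [Ideal.ext_iff, Submodule.mem_colon_singleton, Submodule.mem_bot]

theorem ass_mem_support [IsNoetherianRing R] {X : Type*} [AddCommGroup X] [Module R X]
    (p : PrimeSpectrum R) (hp : p.asIdeal ∈ associatedPrimes R X) : p ∈ Module.support R X := by
  obtain ⟨_, x, hx⟩ := mem_ass_iff.1 hp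
  rw [Module.mem_support_iff']
  exact ⟨x, fun r hr h => hr ((hx r).2 h)⟩

theorem WL.of_support_finite [IsNoetherianRing R] {X : Type u} [AddCommGroup X] [Module R X]
    (h : (Module.support R X).Finite) : IsWeaklyLaskerian R X := fun N => by
  refine (h.image PrimeSpectrum.asIdeal).subset ?_
  intro p hp
  refine ⟨⟨p, hp.1⟩, ?_, rfl⟩
  exact Module.support_subset_of_surjective N.mkQ N.mkQ_surjective (ass_mem_support ⟨p, hp.1⟩ hp)

theorem WL.pi {X : Type u} [AddCommGroup X] [Module R X] (h : IsWeaklyLaskerian R X) (n : ℕ) :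
    IsWeaklyLaskerian R (Fin n → X) := by
  induction n with
  | zero => exact WL.subsingleton
  | succ n ih =>
    refine WL.of_exact (X := X) (Z := Fin n → X) (LinearMap.single R (fun _ : Fin (n+1) => X) 0)
      (LinearMap.funLeft R X Fin.succ) ?_ h ih
    intro y hy
    refine ⟨y 0, ?_⟩
    ext i
    refine Fin.cases ?_ (fun j => ?_) i
    · simp
    · have := congrFun hy j
      simp [LinearMap.funLeft] at this
      simp [this]

theorem WL.hom {N X : Type u} [AddCommGroup X] [Module R X] [AddCommGroup N] [Module R N]
    [Module.Finite R N] (h : IsWeaklyLaskerian R X) :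
    IsWeaklyLaskerian R (N →ₗ[R] X) := by
  obtain ⟨n, s, hs⟩ := Module.Finite.exists_fin (R := R) (M := N)
  refine WL.of_injective (WL.pi h n) (Y := Fin n → X)
    (LinearMap.pi (fun i => LinearMap.applyₗ (s i))) ?_
  rw [← LinearMap.ker_eq_bot, LinearMap.ker_eq_bot']
  intro f hf
  refine LinearMap.ext_on_range (v := s) hs ?_
  intro i
  exact congrFun hf i

open Abelian

theorem WL.ext [IsNoetherianRing R] (N M : ModuleCat.{u} R)
    [Module.Finite R N] (h : IsWeaklyLaskerian R M) (i : ℕ) :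
    IsWeaklyLaskerian R (Abelian.Ext.{u} N M i) := by
  induction i generalizing N with
  | zero =>
    exact WL.of_equiv (WL.hom (N := N) (X := M) h)
        ((Ext.linearEquiv₀ (R := R) (X := N) (Y := M)).trans ModuleCat.homLinearEquiv).symm
  | succ n ih =>
    obtain ⟨N, _, _, _, _, f, surjf⟩ := Module.exists_finite_presentation R N
    let exac := LinearMap.shortExact_shortComplexKer surjf
    exact WL.of_surjective (ih _) (exac.extClass.precompOfLinear R M (add_comm 1 n))
      (precomp_extClass_surjective_of_projective_X₂ M exac n)


theorem WL.ext₂ (N : ModuleCat.{u} R) {S : ShortComplex (ModuleCat.{u} R)}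
    (hS : S.ShortExact) (i : ℕ) (h1 : IsWeaklyLaskerian R (Ext.{u} N S.X₁ i))
    (h3 : IsWeaklyLaskerian R (Ext.{u} N S.X₃ i)) : IsWeaklyLaskerian R (Ext.{u} N S.X₂ i) :=
  WL.of_exact ((Ext.mk₀ S.f).postcompOfLinear R N (add_zero i))
    ((Ext.mk₀ S.g).postcompOfLinear R N (add_zero i))
    (fun y hy => Ext.covariant_sequence_exact₂ N hS y hy) h1 h3

theorem WL.ext₃ (N : ModuleCat.{u} R) {S : ShortComplex (ModuleCat.{u} R)}
    (hS : S.ShortExact) (i : ℕ) (h1 : IsWeaklyLaskerian R (Ext.{u} N S.X₂ i))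
    (h3 : IsWeaklyLaskerian R (Ext.{u} N S.X₁ (i+1))) : IsWeaklyLaskerian R (Ext.{u} N S.X₃ i) :=
  WL.of_exact ((Ext.mk₀ S.g).postcompOfLinear R N (add_zero i))
    (hS.extClass.postcompOfLinear R N rfl)
    (fun y hy => Ext.covariant_sequence_exact₃ N hS y rfl hy) h1 h3

theorem WL.ext₁ (N : ModuleCat.{u} R) {S : ShortComplex (ModuleCat.{u} R)}
    (hS : S.ShortExact) (i : ℕ) (h1 : IsWeaklyLaskerian R (Ext.{u} N S.X₃ i))
    (h3 : IsWeaklyLaskerian R (Ext.{u} N S.X₂ (i+1))) :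
    IsWeaklyLaskerian R (Ext.{u} N S.X₁ (i+1)) :=
  WL.of_exact (hS.extClass.postcompOfLinear R N rfl)
    ((Ext.mk₀ S.f).postcompOfLinear R N (add_zero (i+1)))
    (fun y hy => Ext.covariant_sequence_exact₁ N hS y hy rfl) h1 h3

theorem WL.ext₀ (N : ModuleCat.{u} R) {S : ShortComplex (ModuleCat.{u} R)}
    (hS : S.ShortExact) (h : IsWeaklyLaskerian R (Ext.{u} N S.X₂ 0)) :
    IsWeaklyLaskerian R (Ext.{u} N S.X₁ 0) :=
  have := hS.mono_f
  WL.of_injective h ((Ext.mk₀ S.f).postcompOfLinear R N (add_zero 0))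
    (Ext.postcomp_mk₀_injective_of_mono N S.f)

/-- The key two-sequence argument. -/
theorem WL.ext_of_mul (N : ModuleCat.{u} R) {A B C D : ModuleCat.{u} R} {f : A ⟶ B} {g : B ⟶ C}
    {f' : C ⟶ B} {g' : B ⟶ D} {z : f ≫ g = 0} {z' : f' ≫ g' = 0}
    (hS : (ShortComplex.mk f g z).ShortExact) (hT : (ShortComplex.mk f' g' z').ShortExact) (x : R)
    (hx : g ≫ f' = x • 𝟙 B) (hN : x • 𝟙 N = 0) (i : ℕ)
    (h1 : IsWeaklyLaskerian R (Ext.{u} N A (i+1)))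
    (h2 : IsWeaklyLaskerian R (Ext.{u} N D i)) :
    IsWeaklyLaskerian R (Ext.{u} N B (i+1)) := by
  let G := (Ext.mk₀ g).postcompOfLinear R N (add_zero (i+1))
  let F' := (Ext.mk₀ f').postcompOfLinear R N (add_zero (i+1))
  have hker : IsWeaklyLaskerian R (LinearMap.ker F') := by
    refine WL.of_injective (WL.of_surjective h2
      (hT.extClass.postcompOfLinear R N rfl).rangeRestrict (LinearMap.surjective_rangeRestrict _))
      (Submodule.inclusion ?_) (Submodule.inclusion_injective _)
    intro y hy
    exact Ext.covariant_sequence_exact₁ N hT y hy rfl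
  have hG : ∀ y, G y ∈ LinearMap.ker F' := by
    intro y
    rw [LinearMap.mem_ker]
    change (y.comp (Ext.mk₀ g) (add_zero _)).comp (Ext.mk₀ f') (add_zero _) = 0
    rw [Ext.comp_assoc_of_third_deg_zero, Ext.mk₀_comp_mk₀, hx, ← Ext.smul_eq_comp_mk₀]
    have : y = (Ext.mk₀ (𝟙 N)).comp y (zero_add _) := by simp
    rw [this, ← Ext.smul_comp, ← Ext.mk₀_smul, hN]
    simp
  refine WL.of_exact ((Ext.mk₀ f).postcompOfLinear R N (add_zero (i+1)))
    (G.codRestrict _ hG) ?_ h1 hker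
  intro y hy
  exact Ext.covariant_sequence_exact₂ N hS y (congrArg Subtype.val hy)

end WeaklyLaskerian

section CommAlg

variable {R}

theorem exists_ass_le [IsNoetherianRing R] {X : Type*} [AddCommGroup X] [Module R X]
    (p : PrimeSpectrum R) (hp : p ∈ Module.support R X) :
    ∃ q ∈ associatedPrimes R X, q ≤ p.asIdeal := by
  obtain ⟨x, hx⟩ := Module.mem_support_iff_exists_annihilator.1 hp
  obtain ⟨q, hq, hqp⟩ := Ideal.exists_minimalPrimes_le hx
  refine ⟨q, ?_, hqp⟩
  exact associatedPrimes.subset_of_injective (Submodule.injective_subtype (Submodule.span R {x}))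
    (Module.associatedPrimes.minimalPrimes_annihilator_subset_associatedPrimes R
      (Submodule.span R {x}) hq)

theorem WL.exists_fg_notMem_ass [IsNoetherianRing R] {L : Type u} [AddCommGroup L] [Module R L]
    (h : IsWeaklyLaskerian R L) (p : PrimeSpectrum R) (hinf : (Set.Ici p).Infinite) :
    ∃ N : Submodule R L, N.FG ∧ p.asIdeal ∉ associatedPrimes R (L ⧸ N) := by
  by_contra! hcon
  have hz : ∀ N : {N : Submodule R L // N.FG}, ∃ z : L, ∀ r, r ∈ p.asIdeal ↔ r • z ∈ N.1 := by
    rintro ⟨N, hN⟩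
    obtain ⟨_, x, hx⟩ := mem_ass_iff.1 (hcon N hN)
    obtain ⟨z, rfl⟩ := N.mkQ_surjective x
    refine ⟨z, fun r => ?_⟩
    rw [hx, ← map_smul, Submodule.mkQ_apply, Submodule.Quotient.mk_eq_zero]
  choose z hz using hz
  have hinf' : (Set.Ioi p).Infinite := by
    intro hf
    apply hinf
    rw [← Set.Ioi_insert]
    exact hf.insert p
  let q : ℕ ↪ Set.Ioi p := hinf'.natEmbedding
  let Ns : ℕ → {N : Submodule R L // N.FG} := fun n => Nat.rec ⟨⊥, Submodule.fg_bot⟩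
    (fun i N => ⟨N.1 ⊔ Submodule.map (LinearMap.toSpanSingleton R L (z N)) (q i).1.asIdeal,
      N.2.sup (Submodule.FG.map _ (IsNoetherian.noetherian _))⟩) n
  have hsucc : ∀ i, (Ns (i+1)).1 = (Ns i).1 ⊔
      Submodule.map (LinearMap.toSpanSingleton R L (z (Ns i))) (q i).1.asIdeal := fun i => rfl
  have hmono : Monotone (fun i => (Ns i).1) := monotone_nat_of_le_succ fun i => by
    rw [hsucc]; exact le_sup_left
  have hmem : ∀ i y, y ∈ (Ns (i+1)).1 ↔ ∃ r ∈ (q i).1.asIdeal, y - r • z (Ns i) ∈ (Ns i).1 := by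
    intro i y
    rw [hsucc, Submodule.mem_sup]
    constructor
    · rintro ⟨n, hn, _, ⟨r, hr, rfl⟩, rfl⟩
      refine ⟨r, hr, ?_⟩
      simpa using hn
    · rintro ⟨r, hr, hy⟩
      exact ⟨_, hy, _, ⟨r, hr, rfl⟩, by simp⟩
  have key : ∀ i j, i + 1 ≤ j → ∀ r, r • z (Ns i) ∈ (Ns j).1 ↔ r ∈ (q i).1.asIdeal := by
    intro i j hij
    induction j, hij using Nat.le_induction with
    | base =>
      intro r
      rw [hmem]
      constructor
      · rintro ⟨s, hs, h⟩
        rw [← sub_smul, ← hz] at h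
        have : p.asIdeal ≤ (q i).1.asIdeal := le_of_lt (q i).2
        have := Ideal.add_mem _ (this h) hs
        simpa using this
      · intro hr
        exact ⟨r, hr, by simp⟩
    | succ j hij ih =>
      intro r
      refine ⟨fun hr => ?_, fun hr => hmono (Nat.le_succ j) ((ih r).2 hr)⟩
      obtain ⟨s, hs, hrs⟩ := (hmem _ _).1 hr
      have hlt : p.asIdeal < (q i).1.asIdeal := (q i).2
      obtain ⟨c, hc, hcp⟩ := SetLike.exists_of_lt hlt
      have h1 : (c * s) • z (Ns j) ∈ (Ns j).1 := by
        have h2 : (r * c) • z (Ns i) ∈ (Ns j).1 := (ih _).2 (Ideal.mul_mem_left _ _ hc)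
        have h3 := (Ns j).1.smul_mem c hrs
        have := (Ns j).1.sub_mem h2 h3
        convert this using 1
        module
      rw [← hz] at h1
      have hsp : s ∈ p.asIdeal := (p.2.mem_or_mem h1).resolve_left hcp
      rw [← ih]
      have := (Ns j).1.add_mem hrs ((hz _ _).1 hsp)
      simpa using this
  have hass : ∀ i, (q i).1.asIdeal ∈ associatedPrimes R (L ⧸ (⨆ j, (Ns j).1)) := by
    intro i
    refine mem_ass_iff.2 ⟨(q i).1.2, Submodule.Quotient.mk (z (Ns i)), fun r => ?_⟩
    rw [← Submodule.Quotient.mk_smul, Submodule.Quotient.mk_eq_zero,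
      Submodule.mem_iSup_of_directed _ hmono.directed_le]
    constructor
    · intro hr
      exact ⟨i+1, (key i (i+1) le_rfl r).2 hr⟩
    · rintro ⟨j, hj⟩
      exact (key i (max j (i+1)) (le_max_right _ _) r).1 (hmono (le_max_left _ _) hj)
  refine Set.infinite_of_injective_forall_mem (f := fun i => (q i).1.asIdeal) ?_ hass (h _)
  intro i j hij
  exact q.injective (Subtype.ext (PrimeSpectrum.ext hij))

theorem WL.exists_fg_generic [IsNoetherianRing R] {L : Type u} [AddCommGroup L] [Module R L]
    (h : IsWeaklyLaskerian R L) (p : PrimeSpectrum R) (hinf : (Set.Ici p).Infinite)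
    (hmin : ∀ q ∈ Module.support R L, q ≤ p → q = p) :
    ∃ N : Submodule R L, N.FG ∧ ∀ l : L, ∃ s ∉ p.asIdeal, s • l ∈ N := by
  obtain ⟨N, hN, hp⟩ := WL.exists_fg_notMem_ass h p hinf
  refine ⟨N, hN, ?_⟩
  have : p ∉ Module.support R (L ⧸ N) := by
    intro hs
    obtain ⟨q, hq, hqp⟩ := exists_ass_le p hs
    have hq' := Module.support_subset_of_surjective N.mkQ N.mkQ_surjective
      (ass_mem_support ⟨q, hq.1⟩ hq)
    have := hmin _ hq' hqp
    rw [← this] at hp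
    exact hp hq
  rw [Module.notMem_support_iff'] at this
  intro l
  obtain ⟨s, hs, h⟩ := this (Submodule.Quotient.mk l)
  refine ⟨s, hs, ?_⟩
  rwa [← Submodule.Quotient.mk_smul, Submodule.Quotient.mk_eq_zero] at h

end CommAlg

section Artinian

variable {A : Type*} [CommRing A] {X : Type*} [AddCommGroup X] [Module A X]

/-- Melkersson: an `x`-torsion module with `0 :_X x` Artinian is Artinian. -/
theorem isArtinian_of_torsionBy (x : A) (ht : ∀ m : X, ∃ n : ℕ, x ^ n • m = 0)
    (h : IsArtinian A (Submodule.torsionBy A X x)) : IsArtinian A X := by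
  rw [← monotone_stabilizes_iff_artinian] at h ⊢
  intro N
  let T := Submodule.torsionBy A X x
  let D : ℕ → ℕ → Submodule A T := fun j k =>
    Submodule.comap T.subtype (Submodule.map (LinearMap.lsmul A X (x^k))
      (OrderDual.ofDual (N j)))
  have hD : ∀ j k (t : T), t ∈ D j k ↔ ∃ y ∈ OrderDual.ofDual (N j), x^k • y = t := by
    intro j k t; rfl
  have hN : ∀ {i j}, i ≤ j → ∀ y, y ∈ OrderDual.ofDual (N j) → y ∈ OrderDual.ofDual (N i) :=
    fun hij y hy => N.monotone hij hy
  have hD1 : ∀ {i j} k, i ≤ j → D j k ≤ D i k := by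
    intro i j k hij t ht
    obtain ⟨y, hy, e⟩ := (hD _ _ _).1 ht
    exact (hD _ _ _).2 ⟨y, hN hij y hy, e⟩
  have hD2 : ∀ j {k l}, k ≤ l → D j l ≤ D j k := by
    intro j k l hkl t ht
    obtain ⟨y, hy, e⟩ := (hD _ _ _).1 ht
    refine (hD _ _ _).2 ⟨x^(l-k) • y, Submodule.smul_mem _ _ hy, ?_⟩
    rw [smul_smul, ← pow_add, Nat.add_sub_cancel' hkl, e]
  obtain ⟨n0, hn0⟩ := h ⟨fun n => OrderDual.toDual (D n n), fun a b hab =>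
    (hD2 b hab).trans (hD1 a hab)⟩
  have hk : ∀ k, ∃ n, ∀ m, n ≤ m → D n k = D m k := by
    intro k
    exact h ⟨fun n => OrderDual.toDual (D n k), fun a b hab => hD1 k hab⟩
  choose nk hnk using hk
  let J := max n0 ((Finset.range n0).sup nk)
  have hJ : ∀ k j, J ≤ j → D J k ≤ D j k := by
    intro k j hj
    by_cases hkn : k < n0
    · have h1 : nk k ≤ J := le_max_of_le_right (Finset.le_sup (Finset.mem_range.2 hkn))
      rw [← hnk k J h1, ← hnk k j (h1.trans hj)]
    · push Not at hkn
      have hJ0 : n0 ≤ J := le_max_left _ _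
      have e : D n0 n0 = D (max j k) (max j k) := hn0 (max j k) (le_max_of_le_right hkn)
      calc D J k ≤ D n0 k := hD1 k hJ0
        _ ≤ D n0 n0 := hD2 n0 hkn
        _ = D (max j k) (max j k) := e
        _ ≤ D j (max j k) := hD1 _ (le_max_left _ _)
        _ ≤ D j k := hD2 _ (le_max_right _ _)
  refine ⟨J, fun j hj => ?_⟩
  suffices hh : ∀ k (y : X), x^k • y = 0 → y ∈ OrderDual.ofDual (N J) →
      y ∈ OrderDual.ofDual (N j) by
    apply le_antisymm
    · exact N.monotone hj
    · intro y hy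
      obtain ⟨k, hk⟩ := ht y
      exact hh k y hk hy
  intro k
  induction k with
  | zero =>
    intro y hy _
    rw [pow_zero, one_smul] at hy
    rw [hy]; exact Submodule.zero_mem _
  | succ k ih =>
    intro y hy hyN
    have ht : x^k • y ∈ T := by
      rw [Submodule.mem_torsionBy_iff, smul_smul, ← pow_succ', hy]
    have : (⟨x^k • y, ht⟩ : T) ∈ D J k := (hD _ _ _).2 ⟨y, hyN, rfl⟩
    obtain ⟨w, hw, e⟩ := (hD _ _ _).1 (hJ k j hj this)
    have h1 : y - w ∈ OrderDual.ofDual (N j) :=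
      ih (y - w) (by rw [smul_sub, e, sub_self]) (Submodule.sub_mem _ hyN (hN hj w hw))
    have := Submodule.add_mem _ h1 hw
    simpa using this

theorem isArtinian_of_torsionBySet (s : Finset A) {X : Type*} [AddCommGroup X] [Module A X]
    (ht : ∀ x ∈ s, ∀ m : X, ∃ n : ℕ, x ^ n • m = 0)
    (h : IsArtinian A (Submodule.torsionBySet A X (s : Set A))) : IsArtinian A X := by
  classical
  induction s using Finset.induction_on generalizing X with
  | empty =>
    have : Submodule.torsionBySet A X ((∅ : Finset A) : Set A) = ⊤ := by
      ext; simp [Submodule.mem_torsionBySet_iff]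
    rw [this] at h
    exact isArtinian_of_linearEquiv (Submodule.topEquiv)
  | insert x s hx ih =>
    refine isArtinian_of_torsionBy x (ht x (Finset.mem_insert_self _ _)) ?_
    apply ih
    · intro y hy m
      obtain ⟨n, hn⟩ := ht y (Finset.mem_insert_of_mem hy) m
      exact ⟨n, Subtype.ext hn⟩
    · let f : Submodule.torsionBySet A (Submodule.torsionBy A X x) (s : Set A) →ₗ[A]
          Submodule.torsionBySet A X ((insert x s : Finset A) : Set A) :=
        LinearMap.codRestrict _ ((Submodule.torsionBy A X x).subtype ∘ₗ
          (Submodule.torsionBySet A (Submodule.torsionBy A X x) (s : Set A)).subtype) (by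
          intro c
          rw [Submodule.mem_torsionBySet_iff]
          rintro ⟨a, ha⟩
          rw [Finset.coe_insert, Set.mem_insert_iff] at ha
          rcases ha with rfl | ha
          · exact (Submodule.mem_torsionBy_iff _ _).1 c.1.2
          · exact congrArg Subtype.val ((Submodule.mem_torsionBySet_iff _ _).1 c.2 ⟨a, ha⟩))
      refine isArtinian_of_injective f ?_
      intro c d hcd
      have h' : (f c).1 = (f d).1 := by rw [hcd]
      exact Subtype.ext (Subtype.ext h')

theorem isNoetherian_torsionBySet_pow [IsNoetherianRing A] (I : Ideal A)
    (h : IsNoetherian A (Submodule.torsionBySet A X (I : Set A))) (k : ℕ) :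
    IsNoetherian A (Submodule.torsionBySet A X ((I ^ k : Ideal A) : Set A)) := by
  induction k with
  | zero =>
    have : Submodule.torsionBySet A X ((I ^ 0 : Ideal A) : Set A) = ⊥ := by
      rw [eq_bot_iff]
      intro x hx
      have := (Submodule.mem_torsionBySet_iff _ _).1 hx ⟨1, by simp⟩
      simpa using this
    rw [this]; infer_instance
  | succ k ih =>
    obtain ⟨n, g, hg⟩ := Submodule.fg_iff_exists_fin_generating_family.1
      (IsNoetherian.noetherian I)
    have hgI : ∀ i, g i ∈ I := fun i => hg ▸ Submodule.subset_span ⟨i, rfl⟩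
    let T := Submodule.torsionBySet A X ((I ^ (k+1) : Ideal A) : Set A)
    let φ : T →ₗ[A] (Fin n → Submodule.torsionBySet A X ((I ^ k : Ideal A) : Set A)) :=
      LinearMap.pi fun i => LinearMap.codRestrict _ ((LinearMap.lsmul A X (g i)) ∘ₗ T.subtype) (by
        intro c
        rw [Submodule.mem_torsionBySet_iff]
        rintro ⟨a, ha⟩
        have := (Submodule.mem_torsionBySet_iff _ _).1 c.2
          ⟨a * g i, by rw [pow_succ]; exact Ideal.mul_mem_mul ha (hgI i)⟩
        simpa [mul_smul] using this)
    have hker : IsNoetherian A (LinearMap.ker φ) := by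
      let f : LinearMap.ker φ →ₗ[A] Submodule.torsionBySet A X (I : Set A) :=
        LinearMap.codRestrict _ (T.subtype ∘ₗ (LinearMap.ker φ).subtype) (by
          intro c
          have h0 : ∀ i, g i • c.1.1 = 0 := fun i =>
            congrArg Subtype.val (congrFun (LinearMap.mem_ker.1 c.2) i)
          rw [Submodule.mem_torsionBySet_iff]
          rintro ⟨a, ha⟩
          have : I ≤ (LinearMap.toSpanSingleton A X c.1.1).ker := by
            refine hg.symm.le.trans (Submodule.span_le.2 ?_)
            rintro _ ⟨i, rfl⟩
            exact h0 i
          exact this ha)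
      exact isNoetherian_of_injective f (fun c d hcd => by
        have h' : (f c).1 = (f d).1 := by rw [hcd]
        exact Subtype.ext (Subtype.ext h'))
    exact isNoetherian_of_range_eq_ker (LinearMap.ker φ).subtype φ (by simp)

/-- Sum-irreducible submodules of Artinian modules are secondary. -/
theorem supIrred_secondary [IsArtinian A X] (B : Submodule A X) (hB : SupIrred B) (r : A) :
    r ∈ B.annihilator.radical ∨ B ≤ Submodule.map (LinearMap.lsmul A X r) B := by
  let c : ℕ → Submodule A X := fun n => Submodule.map (LinearMap.lsmul A X (r^n)) B
  have hc : Antitone c := by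
    intro m n hmn
    rintro _ ⟨y, hy, rfl⟩
    refine ⟨r^(n-m) • y, B.smul_mem _ hy, ?_⟩
    change r ^ m • r ^ (n - m) • y = r ^ n • y
    rw [smul_smul, ← pow_add, Nat.add_sub_cancel' hmn]
  obtain ⟨n, hn⟩ := monotone_stabilizes_iff_artinian.2 ‹IsArtinian A X›
    ⟨fun n => OrderDual.toDual (c n), fun a b hab => hc hab⟩
  have hn : ∀ m, n ≤ m → c n = c m := hn
  have hcB : ∀ m, c m ≤ B := by
    rintro m _ ⟨y, hy, rfl⟩
    exact B.smul_mem _ hy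
  have hsup : c n ⊔ (B ⊓ LinearMap.ker (LinearMap.lsmul A X (r^n))) = B := by
    apply le_antisymm (sup_le (hcB n) inf_le_left)
    intro b hb
    have : r^n • b ∈ c (n+n) := by rw [← hn _ (by omega)]; exact ⟨b, hb, rfl⟩
    obtain ⟨y, hy, e⟩ := this
    rw [Submodule.mem_sup]
    refine ⟨r^n • y, ⟨y, hy, rfl⟩, b - r^n • y, ⟨B.sub_mem hb (B.smul_mem _ hy), ?_⟩, by simp⟩
    have e : r^(n+n) • y = r^n • b := e
    simp [smul_sub, smul_smul, ← pow_add, e]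
  rcases hB.2 hsup with h | h
  · right
    have : B = c (n+1) := by rw [← hn _ (by omega), h]
    intro b hb
    have hb' : b ∈ c (n+1) := this ▸ hb
    obtain ⟨y, hy, rfl⟩ := hb'
    exact ⟨r^n • y, B.smul_mem _ hy, by
      change r • r ^ n • y = r ^ (n + 1) • y
      rw [smul_smul, ← pow_succ']⟩
  · left
    refine ⟨n, ?_⟩
    rw [Submodule.mem_annihilator]
    intro b hb
    rw [← h] at hb
    exact hb.2

theorem supIrred_prime [IsArtinian A X] (B : Submodule A X) (hB : SupIrred B) :
    B.annihilator.radical.IsPrime := by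
  have hmap : ∀ r, B ≤ Submodule.map (LinearMap.lsmul A X r) B → ∀ b ∈ B, ∃ b' ∈ B, r • b' = b :=
    fun r h b hb => h hb
  refine ⟨?_, ?_⟩
  · intro h
    have h1 : (1 : A) ∈ B.annihilator.radical := by rw [h]; trivial
    obtain ⟨n, hn⟩ := h1
    rw [one_pow, Submodule.mem_annihilator] at hn
    apply hB.1
    have : B = ⊥ := by
      rw [eq_bot_iff]
      intro b hb
      simpa using hn b hb
    rw [this]; exact isMin_bot
  · intro x y hxy
    rcases supIrred_secondary B hB x with hx | hx
    · exact Or.inl hx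
    rcases supIrred_secondary B hB y with hy | hy
    · exact Or.inr hy
    exfalso
    obtain ⟨n, hn⟩ := hxy
    rw [Submodule.mem_annihilator] at hn
    have hdiv : ∀ n : ℕ, ∀ b ∈ B, ∃ b' ∈ B, (x*y)^n • b' = b := by
      intro n
      induction n with
      | zero => intro b hb; exact ⟨b, hb, by simp⟩
      | succ n ih =>
        intro b hb
        obtain ⟨b1, h1, e1⟩ := hmap x hx b hb
        obtain ⟨b2, h2, e2⟩ := hmap y hy b1 h1
        obtain ⟨b3, h3, e3⟩ := ih b2 h2
        exact ⟨b3, h3, by rw [pow_succ', mul_smul, e3, mul_smul, e2, e1]⟩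
    apply hB.1
    have : B = ⊥ := by
      rw [eq_bot_iff]
      intro b hb
      obtain ⟨b', hb', e⟩ := hdiv n b hb
      rw [hn b' hb'] at e
      simp [← e]
    rw [this]; exact isMin_bot

theorem artinian_avoid [IsNoetherianRing A] [IsArtinian A X] (I : Ideal A) :
    ∃ (Q : Set (Ideal A)) (k : ℕ), Q.Finite ∧ (∀ q ∈ Q, q.IsPrime ∧ ¬ I ≤ q) ∧
      ∀ x : A, (∀ q ∈ Q, x ∉ q) →
        (⊤ : Submodule A X) ≤ LinearMap.range (LinearMap.lsmul A X x) ⊔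
          Submodule.torsionBySet A X ((I ^ k : Ideal A) : Set A) := by
  classical
  obtain ⟨s, hs, hirr⟩ := exists_supIrred_decomposition (⊤ : Submodule A X)
  have hk : ∀ B : Submodule A X, ∃ k : ℕ, I ≤ B.annihilator.radical → I ^ k ≤ B.annihilator := by
    intro B
    by_cases h : I ≤ B.annihilator.radical
    · obtain ⟨k, hk⟩ := Ideal.exists_pow_le_of_le_radical_of_fg h (IsNoetherian.noetherian I)
      exact ⟨k, fun _ => hk⟩
    · exact ⟨0, fun h' => absurd h' h⟩
  choose k hk using hk
  refine ⟨{q | ∃ B ∈ s, q = B.annihilator.radical ∧ ¬ I ≤ q}, s.sup k, ?_, ?_, ?_⟩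
  · refine (s.finite_toSet.image (fun B => B.annihilator.radical)).subset ?_
    rintro q ⟨B, hB, rfl, _⟩
    exact ⟨B, hB, rfl⟩
  · rintro q ⟨B, hB, rfl, h⟩
    exact ⟨supIrred_prime B (hirr hB), h⟩
  · intro x hx
    rw [← hs]
    refine Finset.sup_le fun B hB => ?_
    by_cases h : I ≤ B.annihilator.radical
    · refine le_sup_of_le_right ?_
      intro b hb
      rw [Submodule.mem_torsionBySet_iff]
      rintro ⟨a, ha⟩
      have h1 : I ^ (s.sup k) ≤ B.annihilator :=
        (Ideal.pow_le_pow_right (Finset.le_sup hB)).trans (hk B h)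
      exact Submodule.mem_annihilator.1 (h1 ha) b hb
    · refine le_sup_of_le_left ?_
      have := (supIrred_secondary B (hirr hB) x).resolve_left (hx _ ⟨B, hB, rfl, h⟩)
      exact this.trans (LinearMap.map_le_range)

end Artinian

section Localize

theorem isArtinian_of_killed {A : Type*} [CommRing A] {X : Type*} [AddCommGroup X] [Module A X]
    (I : Ideal A) [I.IsMaximal] (h : Module.IsTorsionBySet A X (I : Set A)) [IsNoetherian A X] :
    IsArtinian A X := by
  let _ : Field (A ⧸ I) := Ideal.Quotient.field I
  let _ : Module (A ⧸ I) X := h.module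
  have : IsSemisimpleModule A X := (h.isSemisimpleModule_iff).1 inferInstance
  infer_instance

variable {R}

theorem localize_avoid [IsNoetherianRing R] {M : Type u} [AddCommGroup M] [Module R M]
    (𝔞 : Ideal R) (p : PrimeSpectrum R) (hp𝔞 : 𝔞 ≤ p.asIdeal)
    (hmin : ∀ q ∈ Module.support R M, q ≤ p → q = p)
    (hinf : (Set.Ici p).Infinite)
    (hL : IsWeaklyLaskerian R (Submodule.torsionBySet R M (𝔞 : Set R))) :
    ∃ Q : Set (Ideal R), Q.Finite ∧ (∀ q ∈ Q, q.IsPrime ∧ ¬ 𝔞 ≤ q) ∧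
      ∀ x : R, (∀ q ∈ Q, x ∉ q) → ∃ G : Submodule R M, G.FG ∧
        ∀ m : M, ∃ s ∉ p.asIdeal, s • m ∈ G ⊔ LinearMap.range (LinearMap.lsmul R M x) := by
  classical
  let S := p.asIdeal.primeCompl
  let A := Localization.AtPrime p.asIdeal
  let X := LocalizedModule S M
  let f : M →ₗ[R] X := LocalizedModule.mkLinearMap S M
  have hNA : IsNoetherianRing A := IsLocalization.isNoetherianRing S A inferInstance
  have hsurj : ∀ y : X, ∃ (m : M) (s : S), s.1 • y = f m := by
    intro y
    obtain ⟨⟨m, s⟩, h⟩ := IsLocalizedModule.surj S f y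
    exact ⟨m, s, h⟩
  have hzero : ∀ m : M, f m = 0 ↔ ∃ s : S, s.1 • m = 0 := fun m =>
    IsLocalizedModule.eq_zero_iff S f
  have hunit : ∀ (W : Submodule A X) (s : S) (y : X), s.1 • y ∈ W ↔ y ∈ W := by
    intro W s y
    rw [← algebraMap_smul A s.1 y, Submodule.smul_mem_iff_of_isUnit _ (IsLocalization.map_units A s)]
  have hunit0 : ∀ (s : S) (y : X), s.1 • y = 0 ↔ y = 0 := by
    intro s y
    simpa using hunit ⊥ s y
  -- (i)
  let I : Ideal A := 𝔞.map (algebraMap R A)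
  have hi : IsNoetherian A (Submodule.torsionBySet A X (I : Set A)) := by
    obtain ⟨N, hN, hNs⟩ := WL.exists_fg_generic hL p hinf (fun q hq =>
      hmin q (Module.support_subset_of_injective (Submodule.subtype _)
        (Submodule.injective_subtype _) hq))
    obtain ⟨t, ht⟩ := hN
    let φ := f ∘ₗ (Submodule.torsionBySet R M (𝔞 : Set R)).subtype
    let W : Submodule A X := Submodule.span A ((t.image φ : Finset X) : Set X)
    have hW : ∀ n ∈ N, φ n ∈ W := by
      have : N ≤ (W.restrictScalars R).comap φ := by
        rw [← ht, Submodule.span_le]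
        intro n hn
        exact Submodule.subset_span (Finset.mem_coe.2 (Finset.mem_image_of_mem _ hn))
      exact this
    have : IsNoetherian A W := isNoetherian_of_fg_of_noetherian _ ⟨_, rfl⟩
    refine isNoetherian_of_le (t := W) ?_
    intro y hy
    obtain ⟨m, s, hms⟩ := hsurj y
    have h1 : ∀ g ∈ 𝔞, ∃ c : S, c.1 • g • m = 0 := by
      intro g hg
      rw [← hzero, map_smul, ← hms, smul_comm, hunit0, ← algebraMap_smul A]
      exact (Submodule.mem_torsionBySet_iff _ _).1 hy ⟨_, Ideal.mem_map_of_mem _ hg⟩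
    obtain ⟨gs, hgs⟩ := (IsNoetherian.noetherian 𝔞 : 𝔞.FG)
    have hgs' : ∀ g ∈ gs, g ∈ 𝔞 := fun g hg => hgs ▸ Submodule.subset_span hg
    have h2 : ∃ c : S, ∀ g ∈ gs, c.1 • g • m = 0 := by
      choose! c hc using h1
      refine ⟨∏ g ∈ gs, c g, fun g hg => ?_⟩
      obtain ⟨d, hd⟩ := Finset.dvd_prod_of_mem c hg
      rw [hd, mul_comm, Submonoid.coe_mul, mul_smul, hc g (hgs' g hg), smul_zero]
    obtain ⟨c, hc⟩ := h2
    have h3 : c.1 • m ∈ Submodule.torsionBySet R M (𝔞 : Set R) := by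
      rw [Submodule.mem_torsionBySet_iff]
      rintro ⟨a, ha⟩
      have : 𝔞 ≤ (LinearMap.toSpanSingleton R M (c.1 • m)).ker := by
        rw [← hgs, Submodule.span_le]
        intro g hg
        change g • c.1 • m = 0
        rw [smul_comm]
        exact hc g hg
      exact this ha
    obtain ⟨u, hu, huN⟩ := hNs ⟨_, h3⟩
    have h4 := hW _ huN
    have h5 : φ (u • ⟨_, h3⟩) = u • c.1 • s.1 • y := by
      rw [hms, map_smul, ← map_smul f]; rfl
    rw [h5] at h4
    exact (hunit W s y).1 ((hunit W c _).1 ((hunit W ⟨u, hu⟩ _).1 h4))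
  -- (ii)
  have hii : ∀ c ∈ p.asIdeal, ∀ y : X, ∃ n : ℕ, (algebraMap R A c) ^ n • y = 0 := by
    intro c hc y
    obtain ⟨m, s, hms⟩ := hsurj y
    have key : ∃ (n : ℕ) (t : S), t.1 • c ^ n • m = 0 := by
      by_contra! hcon
      obtain ⟨q, hq, hqa, hqd⟩ := Ideal.exists_le_prime_disjoint
        (Submodule.span R {m}).annihilator (S ⊔ Submonoid.powers c) (by
          rw [Set.disjoint_left]
          intro a ha ha'
          obtain ⟨t, ht, w, ⟨n, rfl⟩, rfl⟩ := Submonoid.mem_sup.1 ha'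
          rw [SetLike.mem_coe, Submodule.mem_annihilator_span_singleton, mul_smul] at ha
          exact hcon n ⟨t, ht⟩ ha)
      have hqs : (⟨q, hq⟩ : PrimeSpectrum R) ∈ Module.support R M :=
        Module.mem_support_iff_exists_annihilator.2 ⟨m, hqa⟩
      have hqp : (⟨q, hq⟩ : PrimeSpectrum R) ≤ p := by
        intro a ha
        by_contra hap
        exact Set.disjoint_left.1 hqd ha (Submonoid.mem_sup_left hap)
      have := hmin _ hqs hqp
      rw [← this] at hc
      exact Set.disjoint_left.1 hqd hc (Submonoid.mem_sup_right (Submonoid.mem_powers c))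
    obtain ⟨n, t, h⟩ := key
    refine ⟨n, ?_⟩
    rw [← map_pow, algebraMap_smul, ← hunit0 s, smul_comm, hms, ← map_smul, hzero]
    exact ⟨t, h⟩
  -- (iii)
  have hiii : IsArtinian A X := by
    obtain ⟨gs, hgs⟩ := (IsNoetherian.noetherian p.asIdeal : p.asIdeal.FG)
    have hspan : Ideal.span ((gs.image (algebraMap R A) : Finset A) : Set A) =
        IsLocalRing.maximalIdeal A := by
      rw [← Localization.AtPrime.map_eq_maximalIdeal, Finset.coe_image, ← Ideal.map_span]
      congr 1
    refine isArtinian_of_torsionBySet (gs.image (algebraMap R A)) ?_ ?_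
    · intro x hx
      obtain ⟨g, hg, rfl⟩ := Finset.mem_image.1 hx
      exact hii g (hgs ▸ Submodule.subset_span hg)
    · rw [Submodule.torsionBySet_eq_torsionBySet_span]
      change IsArtinian A (Submodule.torsionBySet A X
        ((Ideal.span ((gs.image (algebraMap R A) : Finset A) : Set A) : Ideal A) : Set A))
      rw [hspan]
      have hle : I ≤ IsLocalRing.maximalIdeal A := by
        rw [← Localization.AtPrime.map_eq_maximalIdeal]
        exact Ideal.map_mono hp𝔞
      have : IsNoetherian A (Submodule.torsionBySet A X (IsLocalRing.maximalIdeal A : Set A)) :=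
        isNoetherian_of_le (Submodule.torsionBySet_le_torsionBySet_of_subset hle)
      exact isArtinian_of_killed (IsLocalRing.maximalIdeal A)
        (Submodule.torsionBySet_isTorsionBySet _)
  obtain ⟨Q, k, hQf, hQ, hQx⟩ := artinian_avoid (X := X) I
  refine ⟨Ideal.comap (algebraMap R A) '' Q, hQf.image _, ?_, ?_⟩
  · rintro _ ⟨q, hq, rfl⟩
    have := (hQ q hq).1
    refine ⟨inferInstance, fun h => (hQ q hq).2 ?_⟩
    exact Ideal.map_le_iff_le_comap.2 h
  · intro x hx
    have h1 := hQx (algebraMap R A x) (fun q hq h => hx _ ⟨q, hq, rfl⟩ h)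
    have h2 := isNoetherian_torsionBySet_pow I hi k
    obtain ⟨t, ht⟩ := Submodule.fg_def.1 (isNoetherian_submodule.1 h2 _ le_rfl)
    choose mm ss hms using hsurj
    refine ⟨Submodule.span R (mm '' t), Submodule.fg_span (ht.1.image mm), ?_⟩
    intro m
    obtain ⟨_, ⟨b, rfl⟩, c, hc, hbc⟩ := Submodule.mem_sup.1 (h1 (Submodule.mem_top : f m ∈ ⊤))
    let G := Submodule.span R (mm '' t)
    have h3 : ∀ c ∈ Submodule.span A t, ∃ s : S, ∃ g ∈ G, s.1 • c = f g := by
      intro c hc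
      induction hc using Submodule.span_induction with
      | mem y hy => exact ⟨ss y, mm y, Submodule.subset_span ⟨y, hy, rfl⟩, hms y⟩
      | zero => exact ⟨1, 0, G.zero_mem, by simp⟩
      | add y z _ _ hy hz =>
        obtain ⟨s, g, hg, e⟩ := hy
        obtain ⟨s', g', hg', e'⟩ := hz
        refine ⟨s * s', s'.1 • g + s.1 • g', G.add_mem (G.smul_mem _ hg) (G.smul_mem _ hg'), ?_⟩
        rw [map_add, map_smul, map_smul, ← e, ← e', Submonoid.coe_mul]
        module
      | smul a y _ hy =>
        obtain ⟨s, g, hg, e⟩ := hy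
        obtain ⟨⟨r, s'⟩, hr⟩ := IsLocalization.surj S a
        refine ⟨s' * s, r • g, G.smul_mem _ hg, ?_⟩
        rw [map_smul, ← e, Submonoid.coe_mul, mul_smul, smul_comm s.1 a y,
          ← algebraMap_smul A s'.1, smul_smul, mul_comm, hr, algebraMap_smul]
    obtain ⟨s1, g, hg, e1⟩ := h3 c (ht.2 ▸ hc)
    have e2 := hms b
    have e3 : f ((s1 * ss b).1 • m) = f ((ss b).1 • g + x • s1.1 • mm b) := by
      rw [map_add, map_smul, map_smul, map_smul, map_smul, ← e1, ← e2, ← hbc, Submonoid.coe_mul,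
        LinearMap.lsmul_apply, algebraMap_smul]
      module
    obtain ⟨u, hu⟩ := (hzero _).1 (sub_eq_zero.2 e3 ▸ (map_sub f _ _) :
      f ((s1 * ss b).1 • m - ((ss b).1 • g + x • s1.1 • mm b)) = 0)
    refine ⟨(u * (s1 * ss b)).1, (u * (s1 * ss b)).2, ?_⟩
    rw [smul_sub, sub_eq_zero] at hu
    rw [Submonoid.coe_mul, mul_smul, hu]
    refine Submodule.smul_mem _ _ (Submodule.add_mem_sup (G.smul_mem _ hg) ⟨_, rfl⟩)

end Localize

section Main

variable {R}

open Abelian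

theorem ses {X Y Z : Type u} [AddCommGroup X] [Module R X] [AddCommGroup Y]
    [Module R Y] [AddCommGroup Z] [Module R Z] (f : X →ₗ[R] Y) (g : Y →ₗ[R] Z)
    (hf : Function.Injective f) (hg : Function.Surjective g) (h : Function.Exact f g) :
    ∃ z, (ShortComplex.mk (ModuleCat.ofHom f) (ModuleCat.ofHom g) z).ShortExact :=
  ⟨by ext x; exact h.apply_apply_eq_zero x,
    { exact := (ShortComplex.ShortExact.moduleCat_exact_iff_function_exact _).mpr h
      mono_f := (ModuleCat.mono_iff_injective _).mpr hf
      epi_g := (ModuleCat.epi_iff_surjective _).mpr hg }⟩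

theorem WL.torsion (𝔞 : Ideal R) (M : ModuleCat.{u} R)
    (h : IsWeaklyLaskerian R (Ext.{u} (ModuleCat.of R (R ⧸ 𝔞)) M 0)) :
    IsWeaklyLaskerian R (Submodule.torsionBySet R M (𝔞 : Set R)) := by
  have h' : IsWeaklyLaskerian R ((R ⧸ 𝔞) →ₗ[R] M) :=
    WL.of_equiv h (Ext.linearEquiv₀.trans ModuleCat.homLinearEquiv)
  let φ : ((R ⧸ 𝔞) →ₗ[R] M) →ₗ[R] Submodule.torsionBySet R M (𝔞 : Set R) :=
    LinearMap.codRestrict _ (LinearMap.applyₗ (1 : R ⧸ 𝔞)) (by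
      intro f
      rw [Submodule.mem_torsionBySet_iff]
      rintro ⟨a, ha⟩
      rw [LinearMap.applyₗ_apply_apply, ← map_smul]
      have : a • (1 : R ⧸ 𝔞) = 0 := by
        rw [Algebra.smul_def, mul_one]
        exact Ideal.Quotient.eq_zero_iff_mem.2 ha
      change f (a • (1 : R ⧸ 𝔞)) = 0
      rw [this, map_zero])
  refine WL.of_surjective h' φ ?_
  rintro ⟨m, hm⟩
  refine ⟨Submodule.liftQ 𝔞 (LinearMap.toSpanSingleton R M m) (fun a ha =>
    (Submodule.mem_torsionBySet_iff _ _).1 hm ⟨a, ha⟩), ?_⟩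
  apply Subtype.ext
  change (LinearMap.toSpanSingleton R M m) 1 = m
  simp

theorem ass_finite [IsNoetherianRing R] (𝔞 : Ideal R) {M : Type u} [AddCommGroup M] [Module R M]
    (hs : Module.support R M ⊆ PrimeSpectrum.zeroLocus (𝔞 : Set R))
    (h : IsWeaklyLaskerian R (Submodule.torsionBySet R M (𝔞 : Set R))) :
    (associatedPrimes R M).Finite := by
  refine (WL.ass_of_surjective h LinearMap.id Function.surjective_id).subset ?_
  intro p hp
  have h1 : 𝔞 ≤ p := hs (ass_mem_support ⟨p, hp.1⟩ hp)
  obtain ⟨hpp, x, hx⟩ := mem_ass_iff.1 hp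
  refine mem_ass_iff.2 ⟨hpp, ⟨x, ?_⟩, fun r => ?_⟩
  · rw [Submodule.mem_torsionBySet_iff]
    rintro ⟨a, ha⟩
    exact (hx a).1 (h1 ha)
  · rw [hx]
    exact ⟨fun h => Subtype.ext h, fun h => congrArg Subtype.val h⟩

/-- Minimal elements of the support with infinitely many specializations. -/
def badPrimes (R : Type u) [CommRing R] (M : Type u) [AddCommGroup M] [Module R M] :
    Set (PrimeSpectrum R) :=
  {p | p ∈ Module.support R M ∧ (∀ q ∈ Module.support R M, q ≤ p → q = p) ∧ (Set.Ici p).Infinite}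

theorem badPrimes_finite [IsNoetherianRing R] {M : Type u} [AddCommGroup M] [Module R M]
    (h : (associatedPrimes R M).Finite) : (badPrimes R M).Finite := by
  refine Set.Finite.of_finite_image (f := PrimeSpectrum.asIdeal) (h.subset ?_)
    (fun a _ b _ hab => PrimeSpectrum.ext hab)
  rintro _ ⟨p, ⟨hp, hmin, _⟩, rfl⟩
  obtain ⟨q, hq, hqp⟩ := exists_ass_le p hp
  have := hmin ⟨q, hq.1⟩ (ass_mem_support ⟨q, hq.1⟩ hq) hqp
  rw [← this]
  exact hq

theorem WL.quot [IsNoetherianRing R] (𝔞 : Ideal R) {M : Type u} [AddCommGroup M] [Module R M]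
    (hdim : ∀ a ∈ Module.support R M, ∀ b ∈ Module.support R M, ∀ c ∈ Module.support R M,
      a < b → b < c → False)
    (hs : Module.support R M ⊆ PrimeSpectrum.zeroLocus (𝔞 : Set R))
    (hP : (badPrimes R M).Finite) (T : Submodule R M)
    (hG : ∀ p ∈ badPrimes R M, ∃ G : Submodule R M, G.FG ∧
      ∀ m : M, ∃ s ∉ p.asIdeal, s • m ∈ G ⊔ T)
    (hC : IsWeaklyLaskerian R
      (Ext.{u} (ModuleCat.of R (R ⧸ 𝔞)) (ModuleCat.of R (M ⧸ T)) 0)) :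
    IsWeaklyLaskerian R (M ⧸ T) := by
  choose! G hGfg hG using hG
  let C' : Submodule R (M ⧸ T) := ⨆ p ∈ hP.toFinset, (G p).map T.mkQ
  have hfg : C'.FG := Submodule.fg_biSup _ _ fun p hp =>
    (hGfg p (hP.mem_toFinset.1 hp)).map _
  have : Module.Finite R C' := Module.Finite.iff_fg.2 hfg
  have hnot : ∀ p ∈ badPrimes R M, p ∉ Module.support R ((M ⧸ T) ⧸ C') := by
    intro p hp
    rw [Module.notMem_support_iff']
    intro y
    obtain ⟨y, rfl⟩ := C'.mkQ_surjective y
    obtain ⟨m, rfl⟩ := T.mkQ_surjective y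
    obtain ⟨s, hsp, hsm⟩ := hG p hp m
    refine ⟨s, hsp, ?_⟩
    rw [← map_smul, ← map_smul, Submodule.mkQ_apply, Submodule.Quotient.mk_eq_zero]
    obtain ⟨g, hg, t, ht, e⟩ := Submodule.mem_sup.1 hsm
    have ht' : T.mkQ t = 0 := by simpa using ht
    rw [← e, map_add, ht', add_zero]
    have hle : (G p).map T.mkQ ≤ C' :=
      le_biSup (fun p => (G p).map T.mkQ) (hP.mem_toFinset.2 hp)
    exact hle ⟨g, hg, rfl⟩
  obtain ⟨z, hS⟩ := ses C'.subtype C'.mkQ C'.injective_subtype C'.mkQ_surjective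
    (LinearMap.exact_subtype_mkQ _)
  have h0 : IsWeaklyLaskerian R
      (Ext.{u} (ModuleCat.of R (R ⧸ 𝔞)) (ModuleCat.of R ((M ⧸ T) ⧸ C')) 0) :=
    WL.ext₃ _ hS 0 hC (WL.ext _ _ WL.of_finite 1)
  have hsub : Module.support R ((M ⧸ T) ⧸ C') ⊆ Module.support R M :=
    (Module.support_subset_of_surjective C'.mkQ C'.mkQ_surjective).trans
      (Module.support_subset_of_surjective T.mkQ T.mkQ_surjective)
  have hass := ass_finite 𝔞 (hsub.trans hs) (WL.torsion 𝔞 (ModuleCat.of R ((M ⧸ T) ⧸ C')) h0)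
  have hfin : (Module.support R ((M ⧸ T) ⧸ C')).Finite := by
    refine (hass.biUnion (t := fun q => {r : PrimeSpectrum R | q ≤ r.asIdeal}) ?_).subset ?_
    · intro q hq
      have hq1 := ass_mem_support ⟨q, hq.1⟩ hq
      by_cases hmin : ∀ q' ∈ Module.support R M, q' ≤ ⟨q, hq.1⟩ → q' = ⟨q, hq.1⟩
      · by_contra hinf
        exact hnot ⟨q, hq.1⟩ ⟨hsub hq1, hmin, hinf⟩ hq1
      · push Not at hmin
        obtain ⟨q', hq', hle, hne⟩ := hmin
        refine (Set.finite_singleton (⟨q, hq.1⟩ : PrimeSpectrum R)).subset ?_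
        intro r hr
        have hr : (⟨q, hq.1⟩ : PrimeSpectrum R) ≤ r := hr
        by_contra hr'
        exact hdim q' hq' _ (hsub hq1) r (Module.mem_support_mono hr (hsub hq1))
          (lt_of_le_of_ne hle hne) (lt_of_le_of_ne hr (fun e => hr' e.symm))
    · intro r hr
      obtain ⟨q, hq, hqr⟩ := exists_ass_le r hr
      exact Set.mem_biUnion hq hqr
  exact WL.ext_submodule C' WL.of_finite (WL.of_support_finite hfin)

theorem main_aux [IsNoetherianRing R] (𝔞 : Ideal R) (J : Ideal R) :
    ∀ (M : Type u) [AddCommGroup M] [Module R M], Module.annihilator R M = J →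
    (∀ a ∈ Module.support R M, ∀ b ∈ Module.support R M, ∀ c ∈ Module.support R M,
      a < b → b < c → False) →
    Module.support R M ⊆ PrimeSpectrum.zeroLocus (𝔞 : Set R) →
    IsWeaklyLaskerian R (Ext.{u} (ModuleCat.of R (R ⧸ 𝔞)) (ModuleCat.of R M) 0) →
    IsWeaklyLaskerian R (Ext.{u} (ModuleCat.of R (R ⧸ 𝔞)) (ModuleCat.of R M) 1) →
    ∀ i, IsWeaklyLaskerian R (Ext.{u} (ModuleCat.of R (R ⧸ 𝔞)) (ModuleCat.of R M) i) := by
  induction J using WellFoundedGT.induction with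
  | ind J IH =>
  intro M _ _ hJ hdim hs h0 h1
  have hL := WL.torsion 𝔞 (ModuleCat.of R M) h0
  by_cases hle : 𝔞 ≤ Module.annihilator R M
  · have : IsWeaklyLaskerian R M := by
      refine WL.of_surjective hL (Submodule.subtype _) ?_
      intro m
      refine ⟨⟨m, ?_⟩, rfl⟩
      rw [Submodule.mem_torsionBySet_iff]
      rintro ⟨a, ha⟩
      exact Module.mem_annihilator.1 (hle ha) m
    exact WL.ext _ _ this
  have hP : (badPrimes R M).Finite := badPrimes_finite (ass_finite 𝔞 hs hL)
  have hloc : ∀ p ∈ badPrimes R M, _ := fun p hp =>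
    localize_avoid (M := M) 𝔞 p (hs hp.1) hp.2.1 hp.2.2 hL
  choose! Q hQf hQ hQx using hloc
  -- prime avoidance
  obtain ⟨x, hx𝔞, hxM, hxQ⟩ : ∃ x ∈ 𝔞, x ∉ Module.annihilator R M ∧
      ∀ p ∈ badPrimes R M, ∀ q ∈ Q p, x ∉ q := by
    classical
    have hUf : (⋃ p ∈ badPrimes R M, Q p).Finite := hP.biUnion hQf
    by_contra! hcon
    have hsub : (𝔞 : Set R) ⊆ ⋃ i ∈ ((insert (Module.annihilator R M) hUf.toFinset :
        Finset (Ideal R)) : Set (Ideal R)), ((id i : Ideal R) : Set R) := by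
      intro x hx
      by_cases hxM : x ∈ Module.annihilator R M
      · exact Set.mem_biUnion (Finset.mem_coe.2 (Finset.mem_insert_self _ _)) hxM
      · obtain ⟨p, hp, q, hq, hxq⟩ := hcon x hx hxM
        exact Set.mem_biUnion (Finset.mem_coe.2 (Finset.mem_insert_of_mem
          (hUf.mem_toFinset.2 (Set.mem_biUnion hp hq)))) hxq
    obtain ⟨i, hi, hle'⟩ := (Ideal.subset_union_prime (f := id) (Module.annihilator R M)
      (Module.annihilator R M) (by
        intro i hi hne _
        have := (Finset.mem_insert.1 hi).resolve_left hne
        obtain ⟨p, hp, hq⟩ := Set.mem_iUnion₂.1 (hUf.mem_toFinset.1 this)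
        exact (hQ p hp i hq).1)).1 hsub
    rcases Finset.mem_insert.1 hi with rfl | hi
    · exact hle hle'
    · obtain ⟨p, hp, hq⟩ := Set.mem_iUnion₂.1 (hUf.mem_toFinset.1 hi)
      exact (hQ p hp i hq).2 hle'
  let μ : M →ₗ[R] M := LinearMap.lsmul R M x
  let K := LinearMap.ker μ
  let T := LinearMap.range μ
  obtain ⟨z, hS⟩ := ses K.subtype μ.rangeRestrict K.injective_subtype μ.surjective_rangeRestrict
    (by
      rw [LinearMap.exact_iff, LinearMap.ker_rangeRestrict, Submodule.range_subtype])
  obtain ⟨z', hT⟩ := ses T.subtype T.mkQ T.injective_subtype T.mkQ_surjective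
    (LinearMap.exact_subtype_mkQ _)
  have hKs : Module.support R K ⊆ Module.support R M :=
    Module.support_subset_of_injective K.subtype K.injective_subtype
  have hK0 := WL.ext₀ (ModuleCat.of R (R ⧸ 𝔞)) hS h0
  have hT0 := WL.ext₀ (ModuleCat.of R (R ⧸ 𝔞)) hT h0
  have hK1 := WL.ext₁ (ModuleCat.of R (R ⧸ 𝔞)) hS 0 hT0 h1
  have hK : ∀ i, IsWeaklyLaskerian R (Ext.{u} (ModuleCat.of R (R ⧸ 𝔞)) (ModuleCat.of R K) i) := by
    refine IH (Module.annihilator R K) ?_ K rfl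
      (fun a ha b hb c hc => hdim a (hKs ha) b (hKs hb) c (hKs hc)) (hKs.trans hs) hK0 hK1
    rw [← hJ]
    refine lt_of_le_of_ne (LinearMap.annihilator_le_of_injective K.subtype K.injective_subtype) ?_
    intro e
    apply hxM
    rw [e, Module.mem_annihilator]
    rintro ⟨m, hm⟩
    exact Subtype.ext hm
  have hT1 := WL.ext₃ (ModuleCat.of R (R ⧸ 𝔞)) hS 1 h1 (hK 2)
  have hC0 := WL.ext₃ (ModuleCat.of R (R ⧸ 𝔞)) hT 0 h0 hT1
  have hC : IsWeaklyLaskerian R (M ⧸ T) :=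
    WL.quot 𝔞 hdim hs hP T (fun p hp => hQx p hp x (hxQ p hp)) hC0
  intro i
  cases i with
  | zero => exact h0
  | succ i =>
    refine WL.ext_of_mul (ModuleCat.of R (R ⧸ 𝔞)) hS hT x ?_ ?_ i (hK _) (WL.ext _ _ hC i)
    · ext m; rfl
    · ext
      change x • (1 : R ⧸ 𝔞) = 0
      rw [Algebra.smul_def, mul_one]
      exact Ideal.Quotient.eq_zero_iff_mem.2 hx𝔞

end Main


theorem stmt12 [IsNoetherianRing R] (𝔞 : Ideal R) (M : ModuleCat.{u} R)
    (h1 : suppDim R M ≤ 1)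
    (h2 : Module.support R M ⊆ PrimeSpectrum.zeroLocus (𝔞 : Set R)) :
    IsWeaklyCofinite R 𝔞 M ↔
      IsWeaklyLaskerian R ((R ⧸ 𝔞) →ₗ[R] M) ∧
        IsWeaklyLaskerian R (extModule R 1 (ModuleCat.of R (R ⧸ 𝔞)) M) := by
  obtain ⟨e0⟩ := extModule_zero R (ModuleCat.of R (R ⧸ 𝔞)) M
  have he := fun n => extModule_equiv R (ModuleCat.of R (R ⧸ 𝔞)) M n
  constructor
  · intro h
    exact ⟨WL.of_equiv (h.2 0) e0, h.2 1⟩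
  · rintro ⟨hh, he1⟩
    refine ⟨h2, fun i => ?_⟩
    obtain ⟨f0⟩ := he 0
    obtain ⟨f1⟩ := he 1
    obtain ⟨fi⟩ := he i
    refine WL.of_equiv (main_aux 𝔞 _ M rfl ?_ h2 (WL.of_equiv hh (e0.symm ≪≫ₗ f0))
      (WL.of_equiv he1 f1) i) fi.symm
    intro a ha b hb c hc hab hbc
    let s : LTSeries (Module.support R M) :=
      { length := 2
        toFun := ![⟨a, ha⟩, ⟨b, hb⟩, ⟨c, hc⟩]
        step := by
          intro i
          fin_cases i
          · exact hab
          · exact hbc }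
    have h3 : ((2 : ℕ) : WithBot ℕ∞) ≤ 1 := (Order.LTSeries.length_le_krullDim s).trans h1
    exact absurd h3 (by decide)
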